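/- arXiv:2311.05986 — 2 statements merged into one kernel-verified Lean document; each statement's English description precedes it below -/
import Mathlib

section
/- For every finite simple undirected graph G with l ≥ 1 edges and every partition η of its vertices into communities, the modularity satisfies Q(η) ≥ −1/2. -/
open scoped Classical

/-- For every finite simple undirected graph `G` with `l ≥ 1` edges (given by a symmetric
0/1 adjacency matrix `A` with zero diagonal, degrees `k i = ∑ j, A i j`, and
`l = (1/2) ∑ i j, A i j`) and every partition `η : V → L` of its vertices into communities,
the modularity `Q(η) = (1/(2l)) ∑ i j, (A i j − k i * k j/(2l)) δ(η i, η j)` satisfies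
`Q(η) ≥ −1/2`. -/
theorem modularity_ge_neg_half {V : Type*} [Fintype V] {L : Type*}
    (A : V → V → ℝ)
    (hsym : ∀ i j, A i j = A j i)
    (h01 : ∀ i j, A i j = 0 ∨ A i j = 1)
    (hdiag : ∀ i, A i i = 0)
    (k : V → ℝ) (hk : ∀ i, k i = ∑ j, A i j)
    (l : ℝ) (hl : l = (1 / 2) * ∑ i, ∑ j, A i j)
    (hl1 : 1 ≤ l)
    (η : V → L) :
    (1 / (2 * l)) *
        ∑ i, ∑ j, (A i j - k i * k j / (2 * l)) * (if η i = η j then (1 : ℝ) else 0) ≥ -(1 / 2) := by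
  have hA0 : ∀ i j, 0 ≤ A i j := fun i j => by rcases h01 i j with h | h <;> rw [h] <;> norm_num
  have hk0 : ∀ i, 0 ≤ k i := fun i => by rw [hk]; exact Finset.sum_nonneg fun j _ => hA0 i j
  have hM : ∑ i, ∑ j, A i j = 2 * l := by linarith
  have hkM : ∑ i, k i = 2 * l := by rw [← hM]; exact Finset.sum_congr rfl fun i _ => hk i
  let x : L → V → ℝ := fun c i => if η i = c then 1 else 0
  have hx0 : ∀ c i, 0 ≤ x c i := fun c i => by simp only [x]; split_ifs <;> norm_num
  have hx1 : ∀ c i, x c i ≤ 1 := fun c i => by simp only [x]; split_ifs <;> norm_num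
  let S : Finset L := Finset.univ.image η
  have hS : ∀ i, η i ∈ S := fun i => Finset.mem_image_of_mem η (Finset.mem_univ i)
  have hδ : ∀ i j, (if η i = η j then (1 : ℝ) else 0) = ∑ c ∈ S, x c i * x c j := by
    intro i j
    rw [Finset.sum_eq_single (η i)]
    · simp [x, eq_comm]
    · intro c _ hc
      simp [x, hc.symm]
    · intro h; exact absurd (hS i) h
  have hone : ∀ i, ∑ c ∈ S, x c i = 1 := by
    intro i
    rw [Finset.sum_eq_single (η i)]
    · simp [x]
    · intro c _ hc
      simp [x, hc.symm]
    · intro h; exact absurd (hS i) h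
  have hsum : ∑ i, ∑ j, (A i j - k i * k j / (2 * l)) * (if η i = η j then (1 : ℝ) else 0)
      = ∑ c ∈ S, ∑ i, ∑ j, (A i j - k i * k j / (2 * l)) * (x c i * x c j) := by
    simp_rw [hδ, Finset.mul_sum]
    rw [Finset.sum_comm]
    rw [Finset.sum_comm]
    rw [Finset.sum_comm' (s := S) (t := fun _ => Finset.univ) (t' := Finset.univ) (s' := fun _ => S)
      (by simp)]
    exact Finset.sum_congr rfl fun i _ => Finset.sum_comm
  have hvsum : ∑ c ∈ S, ∑ i, k i * x c i = 2 * l := by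
    rw [Finset.sum_comm, ← hkM]
    refine Finset.sum_congr rfl fun i _ => ?_
    rw [← Finset.mul_sum, hone, mul_one]
  have key : ∀ c, -(∑ i, k i * x c i) / 2 ≤
      ∑ i, ∑ j, (A i j - k i * k j / (2 * l)) * (x c i * x c j) := by
    intro c
    have e1 : ∑ i, ∑ j, (A i j - k i * k j / (2 * l)) * (x c i * x c j)
        = ∑ i, ∑ j, A i j * (x c i * x c j)
          - (∑ i, k i * x c i) * (∑ i, k i * x c i) / (2 * l) := by
      rw [Finset.sum_mul_sum, Finset.sum_div, ← Finset.sum_sub_distrib]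
      refine Finset.sum_congr rfl fun i _ => ?_
      rw [Finset.sum_div, ← Finset.sum_sub_distrib]
      refine Finset.sum_congr rfl fun j _ => ?_
      ring
    have hE0 : 0 ≤ ∑ i, ∑ j, A i j * (x c i * x c j) :=
      Finset.sum_nonneg fun i _ => Finset.sum_nonneg fun j _ =>
        mul_nonneg (hA0 i j) (mul_nonneg (hx0 c i) (hx0 c j))
    have r1 : ∑ i, ∑ j, A i j * x c i = ∑ i, k i * x c i :=
      Finset.sum_congr rfl fun i _ => by rw [hk, Finset.sum_mul]
    have r2 : ∑ i, ∑ j, A i j * x c j = ∑ i, k i * x c i := by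
      rw [Finset.sum_comm, ← r1]
      exact Finset.sum_congr rfl fun i _ => Finset.sum_congr rfl fun j _ => by rw [hsym]
    have hE1 : 2 * (∑ i, k i * x c i) - 2 * l ≤ ∑ i, ∑ j, A i j * (x c i * x c j) := by
      have : 2 * (∑ i, k i * x c i) - 2 * l
          = ∑ i, ∑ j, (A i j * x c i + A i j * x c j - A i j) := by
        simp_rw [Finset.sum_sub_distrib, Finset.sum_add_distrib]
        rw [r1, r2, hM]; ring
      rw [this]
      refine Finset.sum_le_sum fun i _ => Finset.sum_le_sum fun j _ => ?_
      nlinarith [mul_nonneg (hA0 i j)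
        (mul_nonneg (sub_nonneg.2 (hx1 c i)) (sub_nonneg.2 (hx1 c j)))]
    have hv0 : 0 ≤ ∑ i, k i * x c i := Finset.sum_nonneg fun i _ => mul_nonneg (hk0 i) (hx0 c i)
    have hv1 : ∑ i, k i * x c i ≤ 2 * l := by
      rw [← hkM]
      exact Finset.sum_le_sum fun i _ => mul_le_of_le_one_right (hk0 i) (hx1 c i)
    rw [e1]
    generalize ∑ i, ∑ j, A i j * (x c i * x c j) = E at *
    generalize ∑ i, k i * x c i = v at *
    have : v * v / (2 * l) ≤ E + v / 2 := by
      rw [div_le_iff₀ (by linarith)]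
      rcases le_total v l with h | h
      · nlinarith [mul_nonneg hv0 (sub_nonneg.2 h), mul_nonneg hE0 (by linarith : (0:ℝ) ≤ l)]
      · nlinarith [mul_nonneg (sub_nonneg.2 h) (by linarith : 0 ≤ 4 * l - v),
          mul_nonneg (sub_nonneg.2 hE1) (by linarith : (0:ℝ) ≤ l)]
    linarith
  have hfin : -l ≤ ∑ c ∈ S, ∑ i, ∑ j, (A i j - k i * k j / (2 * l)) * (x c i * x c j) := by
    have := Finset.sum_le_sum (s := S) fun c _ => key c
    rw [← Finset.sum_div, Finset.sum_neg_distrib, hvsum] at this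
    linarith
  rw [hsum, ge_iff_le, one_div_mul_eq_div, le_div_iff₀ (by linarith)]
  linarith
end

section
/- Reparameterization invariance of second-level iterated integrals: let φ : [a, b] → [c, d] be continuously differentiable, strictly increasing, with φ(a) = c and φ(b) = d, and let f, g : [c, d] → ℝ be continuously differentiable. Then ∫_a^b (g ∘ φ)'(s) · ( ∫_a^s (f ∘ φ)'(u) du ) ds = ∫_c^d g'(s) · ( ∫_c^s f'(u) du ) ds. -/
theorem secondLevel_congr_Ioo (p q : ℝ) (hpq : p ≤ q) (u v : ℝ → ℝ)
    (h : ∀ x ∈ Set.Ioo p q, u x = v x) : ∫ x in p..q, u x = ∫ x in p..q, v x := by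
  rw [intervalIntegral.integral_of_le hpq, intervalIntegral.integral_of_le hpq,
    MeasureTheory.integral_Ioc_eq_integral_Ioo, MeasureTheory.integral_Ioc_eq_integral_Ioo]
  exact MeasureTheory.setIntegral_congr_fun measurableSet_Ioo h

theorem secondLevel_hasDerivAt (p q : ℝ) (h : ℝ → ℝ)
    (hh : ContDiffOn ℝ 1 h (Set.Icc p q)) (x : ℝ) (hx : x ∈ Set.Ioo p q) :
    HasDerivAt h (derivWithin h (Set.Icc p q) x) x :=
  (((hh.differentiableOn (by norm_num)) x (Set.Ioo_subset_Icc_self hx)).hasDerivWithinAt).hasDerivAt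
    (Icc_mem_nhds hx.1 hx.2)

theorem secondLevel_ftc (p q : ℝ) (hpq : p < q) (h : ℝ → ℝ)
    (hh : ContDiffOn ℝ 1 h (Set.Icc p q)) (s : ℝ) (hs : s ∈ Set.Icc p q) :
    ∫ x in p..s, deriv h x = h s - h p := by
  have hsub : Set.Icc p s ⊆ Set.Icc p q := Set.Icc_subset_Icc_right hs.2
  have hd : ∀ x ∈ Set.Ioo p s, HasDerivAt h (derivWithin h (Set.Icc p q) x) x := fun x hx =>
    secondLevel_hasDerivAt p q h hh x ⟨hx.1, hx.2.trans_le hs.2⟩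
  rw [secondLevel_congr_Ioo p s hs.1 _ (derivWithin h (Set.Icc p q)) fun x hx => (hd x hx).deriv]
  refine intervalIntegral.integral_eq_sub_of_hasDerivAt_of_le hs.1 (hh.continuousOn.mono hsub) hd ?_
  apply ContinuousOn.intervalIntegrable
  rw [Set.uIcc_of_le hs.1]
  exact (hh.continuousOn_derivWithin (uniqueDiffOn_Icc hpq) le_rfl).mono hsub


/-- Reparameterization invariance of second-level iterated integrals: let
`φ : [a, b] → [c, d]` be continuously differentiable, strictly increasing, with `φ a = c`
and `φ b = d`, and let `f, g : [c, d] → ℝ` be continuously differentiable. Then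
`∫_a^b (g ∘ φ)' s * (∫_a^s (f ∘ φ)' u du) ds = ∫_c^d g' s * (∫_c^s f' u du) ds`. -/
theorem second_level_iterated_integral_reparam_invariant
    (a b c d : ℝ) (hab : a ≤ b) (φ f g : ℝ → ℝ)
    (hφmaps : Set.MapsTo φ (Set.Icc a b) (Set.Icc c d))
    (hφ : ContDiffOn ℝ 1 φ (Set.Icc a b))
    (hφmono : StrictMonoOn φ (Set.Icc a b))
    (hφa : φ a = c) (hφb : φ b = d)
    (hf : ContDiffOn ℝ 1 f (Set.Icc c d))
    (hg : ContDiffOn ℝ 1 g (Set.Icc c d)) :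
    ∫ s in a..b, deriv (g ∘ φ) s * ∫ u in a..s, deriv (f ∘ φ) u =
      ∫ s in c..d, deriv g s * ∫ u in c..s, deriv f u := by
  rcases hab.eq_or_lt with rfl | hlt
  · rw [← hφa, ← hφb]; simp
  have hcd : c < d := by
    rw [← hφa, ← hφb]
    exact hφmono (Set.left_mem_Icc.2 hab) (Set.right_mem_Icc.2 hab) hlt
  have hfφ : ContDiffOn ℝ 1 (f ∘ φ) (Set.Icc a b) := hf.comp hφ hφmaps
  have hmapsI : ∀ x ∈ Set.Ioo a b, φ x ∈ Set.Ioo c d := by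
    intro x hx
    have hx' := Set.Ioo_subset_Icc_self hx
    constructor
    · rw [← hφa]; exact hφmono (Set.left_mem_Icc.2 hab) hx' hx.1
    · rw [← hφb]; exact hφmono hx' (Set.right_mem_Icc.2 hab) hx.2
  rw [secondLevel_congr_Ioo a b hab _ (fun s =>
      ((fun y => derivWithin g (Set.Icc c d) y * (f y - f c)) ∘ φ) s *
        derivWithin φ (Set.Icc a b) s) ?_,
    secondLevel_congr_Ioo c d hcd.le _
      (fun y => derivWithin g (Set.Icc c d) y * (f y - f c)) ?_]
  · rw [intervalIntegral.integral_comp_mul_deriv'', hφa, hφb]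
    · rw [Set.uIcc_of_le hab]; exact hφ.continuousOn
    · rw [min_eq_left hab, max_eq_right hab]
      exact fun x hx => (secondLevel_hasDerivAt a b φ hφ x hx).hasDerivWithinAt
    · rw [Set.uIcc_of_le hab]
      exact hφ.continuousOn_derivWithin (uniqueDiffOn_Icc hlt) le_rfl
    · rw [Set.uIcc_of_le hab]
      exact ((hg.continuousOn_derivWithin (uniqueDiffOn_Icc hcd) le_rfl).mul
        (hf.continuousOn.sub continuousOn_const)).mono hφmaps.image_subset
  · intro x hx
    rw [secondLevel_ftc c d hcd f hf x (Set.Ioo_subset_Icc_self hx),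
      (secondLevel_hasDerivAt c d g hg x hx).deriv]
  · intro x hx
    simp only [Function.comp_apply]
    rw [secondLevel_ftc a b hlt (f ∘ φ) hfφ x (Set.Ioo_subset_Icc_self hx),
      ((secondLevel_hasDerivAt c d g hg (φ x) (hmapsI x hx)).comp x
        (secondLevel_hasDerivAt a b φ hφ x hx)).deriv]
    simp only [Function.comp_apply, hφa]
    ring
end
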